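/- Let (X, ρ) be a compact metric space, let μ and ν be Borel probability measures on X, and let δ > 0. Suppose that for every L ≥ 0 and every L-Lipschitz function φ : X → ℝ one has |∫_X φ dμ − ∫_X φ dν| ≤ δ·L. Then for every γ ∈ (0,1], every H ≥ 0 and every function φ : X → ℝ that is γ-Hölder with constant H (i.e. |φ(x) − φ(y)| ≤ H·ρ(x,y)^γ for all x,y ∈ X), one has |∫_X φ dμ − ∫_X φ dν| ≤ 3·H·δ^γ. -/

import Mathlib

/-!
Since `t ↦ t ^ γ` is concave, it lies below its tangent line at `δ`, so a `γ`-Hölder `φ` satisfies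
`φ x ≤ φ y + L * dist x y + c` with `L = H * γ * δ ^ (γ - 1)` and `c = H * δ ^ γ - δ * L`. The
largest `L`-Lipschitz minorant of `φ` is then within `c` of `φ`, always from below, so that passing
to it costs `c` only once in the difference of the two integrals. The total is
`δ * L + c = H * δ ^ γ`, which is attained by two Dirac masses at distance `δ`.
-/

open MeasureTheory Set
open scoped NNReal

section LipschitzEnvelope

variable {X : Type*} [PseudoMetricSpace X] {L : ℝ≥0} {c : ℝ} {φ : X → ℝ}

/-- The Pasch–Hausdorff envelope of `φ`, that is, its largest `L`-Lipschitz minorant; it serves as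
the Lipschitz approximation of `φ`. The infimum is the junk value `0` where it is not bounded
below. -/
noncomputable def lipschitzEnvelope (L : ℝ≥0) (φ : X → ℝ) (x : X) : ℝ :=
  ⨅ y, (φ y + L * dist x y)

lemma lipschitzEnvelope_le {x : X} (hx : BddBelow (range fun y ↦ φ y + L * dist x y)) :
    lipschitzEnvelope L φ x ≤ φ x := by
  simpa only [lipschitzEnvelope, dist_self, mul_zero, add_zero] using ciInf_le hx x

lemma lipschitzWith_lipschitzEnvelope
    (hφ : ∀ x, BddBelow (range fun y ↦ φ y + L * dist x y)) :
    LipschitzWith L (lipschitzEnvelope L φ) := by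
  refine LipschitzWith.of_le_add_mul L fun x y ↦ ?_
  have : Nonempty X := ⟨x⟩
  rw [← sub_le_iff_le_add]
  refine le_ciInf fun z ↦ sub_le_iff_le_add.2 ?_
  calc lipschitzEnvelope L φ x ≤ φ z + L * dist x z := ciInf_le (hφ x) z
    _ ≤ φ z + L * (dist x y + dist y z) := by gcongr; exact dist_triangle x y z
    _ = φ z + L * dist y z + L * dist x y := by ring

lemma bddBelow_range_add_mul_dist (hφ : ∀ x y, φ x ≤ φ y + L * dist x y + c) (x : X) :
    BddBelow (range fun y ↦ φ y + L * dist x y) :=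
  ⟨φ x - c, forall_mem_range.2 fun y ↦ sub_le_iff_le_add.2 (hφ x y)⟩

lemma le_lipschitzEnvelope_add (hφ : ∀ x y, φ x ≤ φ y + L * dist x y + c) (x : X) :
    φ x ≤ lipschitzEnvelope L φ x + c := by
  have : Nonempty X := ⟨x⟩
  exact sub_le_iff_le_add.1 (le_ciInf fun y ↦ sub_le_iff_le_add.2 (hφ x y))

end LipschitzEnvelope

lemma abs_integral_sub_integral_le_add_of_sandwich {X : Type*} [MeasurableSpace X]
    {μ ν : Measure X} [IsProbabilityMeasure μ] [IsProbabilityMeasure ν] {φ ψ : X → ℝ} {c : ℝ}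
    (hφμ : Integrable φ μ) (hφν : Integrable φ ν) (hψμ : Integrable ψ μ) (hψν : Integrable ψ ν)
    (hψφ : ∀ x, ψ x ≤ φ x) (hφψ : ∀ x, φ x ≤ ψ x + c) :
    |(∫ x, φ x ∂μ) - ∫ x, φ x ∂ν| ≤ |(∫ x, ψ x ∂μ) - ∫ x, ψ x ∂ν| + c := by
  have integral_bounds (m : Measure X) [IsProbabilityMeasure m] (hφ : Integrable φ m)
      (hψ : Integrable ψ m) :
      ∫ x, ψ x ∂m ≤ ∫ x, φ x ∂m ∧ ∫ x, φ x ∂m ≤ (∫ x, ψ x ∂m) + c := by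
    refine ⟨integral_mono hψ hφ hψφ, ?_⟩
    calc ∫ x, φ x ∂m ≤ ∫ x, (ψ x + c) ∂m :=
          integral_mono hφ (hψ.add (integrable_const c)) hφψ
      _ = (∫ x, ψ x ∂m) + c := by
          rw [integral_add hψ (integrable_const c), integral_const, probReal_univ, one_smul]
  obtain ⟨hμ_lower, hμ_upper⟩ := integral_bounds μ hφμ hψμ
  obtain ⟨hν_lower, hν_upper⟩ := integral_bounds ν hφν hψν
  obtain ⟨hψ_lower, hψ_upper⟩ := abs_le.1 (le_refl |(∫ x, ψ x ∂μ) - ∫ x, ψ x ∂ν|)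
  exact abs_le.2 ⟨by linarith, by linarith⟩

lemma abs_integral_sub_integral_le_add_of_lipschitz_bound {X : Type*} [PseudoMetricSpace X]
    [MeasurableSpace X] [OpensMeasurableSpace X] {μ ν : Measure X} [IsProbabilityMeasure μ]
    [IsProbabilityMeasure ν] {L : ℝ≥0} {B c : ℝ} {φ : X → ℝ}
    (hLip : ∀ ψ : X → ℝ, LipschitzWith L ψ → Integrable ψ μ → Integrable ψ ν →
      |(∫ x, ψ x ∂μ) - ∫ x, ψ x ∂ν| ≤ B)
    (hφμ : Integrable φ μ) (hφν : Integrable φ ν)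
    (hφ : ∀ x y, φ x ≤ φ y + L * dist x y + c) :
    |(∫ x, φ x ∂μ) - ∫ x, φ x ∂ν| ≤ B + c := by
  have hbdd := bddBelow_range_add_mul_dist hφ
  have hψ_lip : LipschitzWith L (lipschitzEnvelope L φ) := lipschitzWith_lipschitzEnvelope hbdd
  have hψ_le (x : X) : lipschitzEnvelope L φ x ≤ φ x := lipschitzEnvelope_le (hbdd x)
  have hψ_ge := le_lipschitzEnvelope_add hφ
  have hψ_int (m : Measure X) [IsProbabilityMeasure m] (hm : Integrable φ m) :
      Integrable (lipschitzEnvelope L φ) m :=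
    integrable_of_le_of_le hψ_lip.continuous.aestronglyMeasurable
      (.of_forall fun x ↦ sub_le_iff_le_add.2 (hψ_ge x)) (.of_forall hψ_le)
      (hm.sub (integrable_const c)) hm
  calc |(∫ x, φ x ∂μ) - ∫ x, φ x ∂ν|
      ≤ |(∫ x, lipschitzEnvelope L φ x ∂μ) - ∫ x, lipschitzEnvelope L φ x ∂ν| + c :=
        abs_integral_sub_integral_le_add_of_sandwich hφμ hφν (hψ_int μ hφμ) (hψ_int ν hφν)
          hψ_le hψ_ge
    _ ≤ B + c := by gcongr; exact hLip _ hψ_lip (hψ_int μ hφμ) (hψ_int ν hφν)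

lemma rpow_le_tangent_line {δ t γ : ℝ} (hδ : 0 < δ) (ht : 0 ≤ t) (hγ : 0 ≤ γ) (hγ1 : γ ≤ 1) :
    t ^ γ ≤ δ ^ γ + γ * δ ^ (γ - 1) * (t - δ) := by
  have hs : -1 ≤ t / δ - 1 := by linarith [div_nonneg ht hδ.le]
  calc t ^ γ = δ ^ γ * (1 + (t / δ - 1)) ^ γ := by
        rw [add_sub_cancel, ← Real.mul_rpow hδ.le (by positivity), mul_div_cancel₀ t hδ.ne']
    _ ≤ δ ^ γ * (1 + γ * (t / δ - 1)) := by
        gcongr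
        exact rpow_one_add_le_one_add_mul_self hs hγ hγ1
    _ = δ ^ γ + γ * δ ^ (γ - 1) * (t - δ) := by
        rw [Real.rpow_sub_one hδ.ne']
        field_simp

lemma holderWith_of_dist_le_mul_rpow {X Y : Type*} [PseudoMetricSpace X] [PseudoMetricSpace Y]
    {C r : ℝ≥0} {f : X → Y} (hf : ∀ x y, dist (f x) (f y) ≤ C * dist x y ^ (r : ℝ)) :
    HolderWith C r f := fun x y ↦ by
  rw [edist_nndist, edist_nndist, ← ENNReal.coe_rpow_of_nonneg _ r.coe_nonneg]
  exact_mod_cast hf x y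

lemma continuous_of_abs_sub_le_mul_rpow {X : Type*} [PseudoMetricSpace X] {γ H : ℝ} {φ : X → ℝ}
    (hγ : 0 < γ) (hH : 0 ≤ H) (hφ : ∀ x y, |φ x - φ y| ≤ H * dist x y ^ γ) : Continuous φ := by
  lift γ to ℝ≥0 using hγ.le
  lift H to ℝ≥0 using hH
  exact (holderWith_of_dist_le_mul_rpow hφ).continuous hγ

theorem stmt_14_general {X : Type*} [PseudoMetricSpace X] [MeasurableSpace X]
    [OpensMeasurableSpace X] {μ ν : Measure X} [IsProbabilityMeasure μ] [IsProbabilityMeasure ν]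
    {δ : ℝ} (hδ : 0 < δ)
    (hLip : ∀ L : ℝ, 0 ≤ L → ∀ ψ : X → ℝ, (∀ x y : X, |ψ x - ψ y| ≤ L * dist x y) →
      Integrable ψ μ → Integrable ψ ν → |(∫ x, ψ x ∂μ) - ∫ x, ψ x ∂ν| ≤ δ * L)
    {γ : ℝ} (hγ : 0 ≤ γ) (hγ1 : γ ≤ 1) {H : ℝ} (hH : 0 ≤ H) {φ : X → ℝ}
    (hφμ : Integrable φ μ) (hφν : Integrable φ ν)
    (hφ : ∀ x y : X, |φ x - φ y| ≤ H * dist x y ^ γ) :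
    |(∫ x, φ x ∂μ) - ∫ x, φ x ∂ν| ≤ H * δ ^ γ := by
  obtain ⟨L, hL⟩ : ∃ L : ℝ≥0, (L : ℝ) = H * (γ * δ ^ (γ - 1)) := ⟨⟨_, by positivity⟩, rfl⟩
  have hφ_affine (x y : X) : φ x ≤ φ y + L * dist x y + (H * δ ^ γ - δ * L) := by
    rw [add_assoc, ← sub_le_iff_le_add']
    calc φ x - φ y ≤ H * dist x y ^ γ := le_of_abs_le (hφ x y)
      _ ≤ H * (δ ^ γ + γ * δ ^ (γ - 1) * (dist x y - δ)) := by
          gcongr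
          exact rpow_le_tangent_line hδ dist_nonneg hγ hγ1
      _ = L * dist x y + (H * δ ^ γ - δ * L) := by rw [hL]; ring
  calc |(∫ x, φ x ∂μ) - ∫ x, φ x ∂ν| ≤ δ * L + (H * δ ^ γ - δ * L) :=
        abs_integral_sub_integral_le_add_of_lipschitz_bound
          (fun ψ hψ ↦ hLip L L.coe_nonneg ψ hψ.dist_le_mul) hφμ hφν hφ_affine
    _ = H * δ ^ γ := add_sub_cancel _ _

/-- Interpolation from Lipschitz to Hölder observables: if `μ, ν` are Borel
probability measures on a compact metric space `X` and `δ > 0` is such that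
`|∫ φ dμ − ∫ φ dν| ≤ δ·L` for every `L ≥ 0` and every `L`-Lipschitz `φ : X → ℝ`,
then for every `γ ∈ (0,1]`, `H ≥ 0` and every `γ`-Hölder `φ` with constant `H`
one has `|∫ φ dμ − ∫ φ dν| ≤ 3·H·δ^γ`. -/
theorem stmt_14 {X : Type*} [MetricSpace X] [CompactSpace X]
    [MeasurableSpace X] [BorelSpace X]
    (μ ν : MeasureTheory.Measure X)
    [MeasureTheory.IsProbabilityMeasure μ] [MeasureTheory.IsProbabilityMeasure ν]
    (δ : ℝ) (hδ : 0 < δ)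
    (hLip : ∀ L : ℝ, 0 ≤ L → ∀ φ : X → ℝ,
      (∀ x y : X, |φ x - φ y| ≤ L * dist x y) →
      |(∫ x, φ x ∂μ) - ∫ x, φ x ∂ν| ≤ δ * L) :
    ∀ γ : ℝ, 0 < γ → γ ≤ 1 → ∀ H : ℝ, 0 ≤ H → ∀ φ : X → ℝ,
      (∀ x y : X, |φ x - φ y| ≤ H * dist x y ^ γ) →
      |(∫ x, φ x ∂μ) - ∫ x, φ x ∂ν| ≤ 3 * H * δ ^ γ := by
  intro γ hγ hγ1 H hH φ hφ
  have hint (m : Measure X) [IsProbabilityMeasure m] : Integrable φ m :=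
    (continuous_of_abs_sub_le_mul_rpow hγ hH hφ).integrable_of_hasCompactSupport
      (.of_compactSpace φ)
  have hsharp : |(∫ x, φ x ∂μ) - ∫ x, φ x ∂ν| ≤ H * δ ^ γ :=
    stmt_14_general hδ (fun L hL ψ hψ _ _ ↦ hLip L hL ψ hψ) hγ.le hγ1 hH (hint μ) (hint ν) hφ
  have hnonneg : 0 ≤ H * δ ^ γ := by positivity
  linarith
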